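/- arXiv:2203.11982 — 2 statements merged into one kernel-verified Lean document; each statement's English description precedes it below -/
import Mathlib

section
/- Let σ be the nontrivial automorphism of K over ℚ, let 𝔞 be a nonzero fractional ideal of 𝓞_K with absolute norm N = N(𝔞) ∈ ℚ_{>0}, let (x, y) be a K-basis of K², and let L = 𝓞_K·x + 𝔞·y ⊆ K². Let H : K² × K² → K be a σ-hermitian form: K-linear in the first variable, σ-semilinear in the second (H(v, c·w) = σ(c)·H(v,w)), with σ(H(v,w)) = H(w,v). Assume H(u,v) ∈ 𝓞_K for all u, v ∈ L, and that N·(H(x,x)·H(y,y) − H(x,y)·H(y,x)) = 1. Then there exists a K-linear automorphism φ of K² such that φ maps σ(L) (the image of L under coordinatewise σ) onto σ(𝔞)·L (the submodule generated by {σ(a)·v : a ∈ 𝔞, v ∈ L}) and such that N⁻¹·H(φ(u), φ(v)) = σ(H(σ(u), σ(v))) for all u, v ∈ K², where σ acts coordinatewise on K². In other words, the conjugate hermitian lattice (σ(L), H̄) is isometric to (σ(𝔞)·L, N⁻¹·H). -/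
open NumberField

open scoped Pointwise nonZeroDivisors

/-!
Put `ψ v = N (H(y, v) x - H(x, v) y)`. This map is `σ`-semilinear and, since the Gram determinant
of `(x, y)` is `N⁻¹`, it satisfies `ψ² = -N` and `H(ψ u, ψ v) = N σ(H(u, v))`; so composing it with
coordinatewise conjugation gives a linear map `φ` with the required effect on `H`.

As for the lattices, `𝔞 σ(𝔞) = (N)`, because the product of the Galois conjugates of an ideal is
generated by its absolute norm. Integrality of `H` on `L` then gives `ψ(L) ⊆ σ(𝔞) L`, whence
`ψ(σ(𝔞) L) ⊆ 𝔞 σ(𝔞) L = N L = ψ(ψ(L))`, and injectivity of `ψ` yields `ψ(L) = σ(𝔞) L`.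
-/

section GaloisConjugates

variable {K : Type*} [Field K] [NumberField K]

theorem absNorm_smul_eq (σ : Gal(K/ℚ)) (I : Ideal (𝓞 K)) :
    Ideal.absNorm (σ • I) = Ideal.absNorm I := by
  rw [← Ideal.absNorm_relNorm ℤ, Ideal.relNorm_smul, Ideal.absNorm_relNorm]

theorem prod_smul_eq_intNorm [IsGalois ℚ K] (z : 𝓞 K) :
    ∏ σ : Gal(K/ℚ), σ • z = (Algebra.intNorm ℤ (𝓞 K) z : 𝓞 K) := by
  apply RingOfIntegers.ext
  have h := Algebra.norm_eq_prod_automorphisms ℚ (z : K)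
  rw [← Algebra.algebraMap_intNorm (A := ℤ)] at h
  simpa [algebraMap.coe_smul'] using h.symm

theorem absNorm_mem_prod_smul [IsGalois ℚ K] (I : Ideal (𝓞 K)) :
    (Ideal.absNorm I : 𝓞 K) ∈ ∏ σ : Gal(K/ℚ), σ • I := by
  have relNorm_le : Ideal.relNorm ℤ I ≤ (∏ σ : Gal(K/ℚ), σ • I).comap (algebraMap ℤ (𝓞 K)) := by
    rw [Ideal.relNorm_apply, Ideal.span_le]
    rintro _ ⟨z, hz, rfl⟩
    rw [SetLike.mem_coe, Ideal.mem_comap, eq_intCast, ← prod_smul_eq_intNorm]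
    exact Ideal.prod_mem_prod fun σ _ ↦ Ideal.smul_mem_pointwise_smul σ z I hz
  have absNorm_mem : (Ideal.absNorm I : ℤ) ∈ Ideal.relNorm ℤ I := by
    rw [Ideal.relNorm_int]
    exact Ideal.mem_span_singleton_self _
  simpa using relNorm_le absNorm_mem

theorem eq_of_le_of_absNorm_eq {S : Type*} [CommRing S] [IsDedekindDomain S] [Module.Free ℤ S]
    [Module.Finite ℤ S] {I J : Ideal S} (hle : I ≤ J)
    (hnorm : Ideal.absNorm I = Ideal.absNorm J) : I = J := by
  rcases eq_or_ne J ⊥ with rfl | hJ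
  · exact le_bot_iff.mp hle
  obtain ⟨I', rfl⟩ := Ideal.dvd_iff_le.mpr hle
  rw [map_mul, mul_eq_left₀ (mt Ideal.absNorm_eq_zero_iff.mp hJ), Ideal.absNorm_eq_one_iff]
    at hnorm
  rw [hnorm, Ideal.mul_top]

theorem prod_smul_eq_span_absNorm [IsGalois ℚ K] (I : Ideal (𝓞 K)) :
    ∏ σ : Gal(K/ℚ), σ • I = Ideal.span {(Ideal.absNorm I : 𝓞 K)} := by
  symm
  apply eq_of_le_of_absNorm_eq
  · rw [Ideal.span_singleton_le_iff_mem]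
    exact absNorm_mem_prod_smul I
  · rw [Ideal.absNorm_span_natCast, RingOfIntegers.rank, ← IsGalois.card_aut_eq_finrank ℚ K]
    simp [absNorm_smul_eq]

/-- The conjugate `σ(𝔞) = {σ a | a ∈ 𝔞}` of a fractional ideal (see `mem_galConj`), encoded as the
extension of `𝔞` along the action of `σ` on `𝓞 K` so that it is a ring homomorphism by
construction. -/
noncomputable def galConj (σ : Gal(K/ℚ)) :
    FractionalIdeal (𝓞 K)⁰ K →+* FractionalIdeal (𝓞 K)⁰ K :=
  FractionalIdeal.extendedHom' K (f := MulSemiringAction.toRingHom Gal(K/ℚ) (𝓞 K) σ)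
    (nonZeroDivisors_le_comap_nonZeroDivisors_of_injective _ (MulAction.injective σ))

theorem isLocalization_map_smul_eq (σ : Gal(K/ℚ))
    (h : (𝓞 K)⁰ ≤ (𝓞 K)⁰.comap (MulSemiringAction.toRingHom Gal(K/ℚ) (𝓞 K) σ)) :
    IsLocalization.map K (MulSemiringAction.toRingHom Gal(K/ℚ) (𝓞 K) σ) h = (σ : K →+* K) := by
  apply IsLocalization.ringHom_ext (𝓞 K)⁰
  rw [IsLocalization.map_comp]
  rfl

theorem mem_galConj {σ : Gal(K/ℚ)} {𝔞 : FractionalIdeal (𝓞 K)⁰ K} {z : K} :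
    z ∈ galConj σ 𝔞 ↔ ∃ a ∈ 𝔞, σ a = z := by
  rw [galConj, FractionalIdeal.extendedHom'_apply, FractionalIdeal.mem_extended_iff,
    isLocalization_map_smul_eq]
  constructor
  · intro hz
    induction hz using Submodule.span_induction with
    | mem _ hz => exact hz
    | zero => exact ⟨0, 𝔞.zero_mem, map_zero σ⟩
    | add _ _ _ _ hz hw =>
      obtain ⟨⟨a, ha, rfl⟩, ⟨b, hb, rfl⟩⟩ := And.intro hz hw
      exact ⟨a + b, Submodule.add_mem 𝔞.coeToSubmodule ha hb, map_add σ a b⟩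
    | smul r _ _ hz =>
      obtain ⟨a, ha, rfl⟩ := hz
      refine ⟨(σ⁻¹ • r) • a, Submodule.smul_mem 𝔞.coeToSubmodule _ ha, ?_⟩
      have := smul_distrib_smul σ (σ⁻¹ • r) a
      rwa [smul_inv_smul] at this
  · rintro ⟨a, ha, rfl⟩
    exact Submodule.subset_span ⟨a, ha, rfl⟩

theorem galConj_coeIdeal (σ : Gal(K/ℚ)) (I : Ideal (𝓞 K)) :
    galConj σ (I : FractionalIdeal (𝓞 K)⁰ K) = (σ • I : Ideal (𝓞 K)) := by
  rw [galConj, FractionalIdeal.extendedHom'_apply, FractionalIdeal.extended_coeIdeal_eq_map,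
    Ideal.pointwise_smul_def]

theorem prod_galConj_coeIdeal [IsGalois ℚ K] (I : Ideal (𝓞 K)) :
    ∏ σ : Gal(K/ℚ), galConj σ (I : FractionalIdeal (𝓞 K)⁰ K) =
      FractionalIdeal.spanSingleton (𝓞 K)⁰ (Ideal.absNorm I : K) := by
  simp only [galConj_coeIdeal]
  have := congrArg (FractionalIdeal.coeIdealHom (𝓞 K)⁰ K) (prod_smul_eq_span_absNorm I)
  simpa [FractionalIdeal.coeIdeal_span_singleton] using this

theorem prod_galConj [IsGalois ℚ K] (𝔞 : FractionalIdeal (𝓞 K)⁰ K) :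
    ∏ σ : Gal(K/ℚ), galConj σ 𝔞 =
      FractionalIdeal.spanSingleton (𝓞 K)⁰ (FractionalIdeal.absNorm 𝔞 : K) := by
  have integral_case (I : Ideal (𝓞 K)) :
      ∏ σ : Gal(K/ℚ), galConj σ (I : FractionalIdeal (𝓞 K)⁰ K) =
        FractionalIdeal.spanSingleton (𝓞 K)⁰
          (FractionalIdeal.absNorm (I : FractionalIdeal (𝓞 K)⁰ K) : K) := by
    rw [prod_galConj_coeIdeal, FractionalIdeal.coeIdeal_absNorm, Rat.cast_natCast]
  set d := Ideal.span {(𝔞.den : 𝓞 K)}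
  have den_mul : (d : FractionalIdeal (𝓞 K)⁰ K) * 𝔞 = 𝔞.num := by
    rw [FractionalIdeal.coeIdeal_span_singleton, FractionalIdeal.den_mul_self_eq_num']
  have spanSingleton_ne_zero : FractionalIdeal.spanSingleton (𝓞 K)⁰
      (FractionalIdeal.absNorm (d : FractionalIdeal (𝓞 K)⁰ K) : K) ≠ 0 := by
    simp [FractionalIdeal.spanSingleton_ne_zero_iff, d, -FractionalIdeal.coeIdeal_span_singleton]
  apply mul_left_cancel₀ spanSingleton_ne_zero
  rw [FractionalIdeal.spanSingleton_mul_spanSingleton, ← Rat.cast_mul, ← map_mul, den_mul,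
    ← integral_case, ← integral_case, ← Finset.prod_mul_distrib]
  simp only [← map_mul, den_mul]

theorem univ_gal_eq_pair [Algebra.IsQuadraticExtension ℚ K] [DecidableEq Gal(K/ℚ)]
    {σ : Gal(K/ℚ)} (hσ : σ ≠ 1) : (Finset.univ : Finset Gal(K/ℚ)) = {1, σ} := by
  symm
  apply Finset.eq_univ_of_card
  rw [Finset.card_pair hσ.symm, ← Nat.card_eq_fintype_card, IsGalois.card_aut_eq_finrank,
    Algebra.IsQuadraticExtension.finrank_eq_two]

theorem gal_apply_apply [Algebra.IsQuadraticExtension ℚ K] (σ : Gal(K/ℚ)) (z : K) :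
    σ (σ z) = z := by
  have sq_eq_one : σ ^ 2 = 1 := by
    rw [← Algebra.IsQuadraticExtension.finrank_eq_two ℚ K, ← IsGalois.card_aut_eq_finrank,
      pow_card_eq_one']
  simpa [sq] using DFunLike.congr_fun sq_eq_one z

theorem mul_galConj [Algebra.IsQuadraticExtension ℚ K] {σ : Gal(K/ℚ)} (hσ : σ ≠ 1)
    (𝔞 : FractionalIdeal (𝓞 K)⁰ K) :
    𝔞 * galConj σ 𝔞 =
      FractionalIdeal.spanSingleton (𝓞 K)⁰ (FractionalIdeal.absNorm 𝔞 : K) := by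
  classical
  rw [← prod_galConj, univ_gal_eq_pair hσ, Finset.prod_pair hσ.symm]
  congr
  ext
  simp [mem_galConj]

end GaloisConjugates

section QuaternionicMap

variable {K V : Type*} [CommRing K] [AddCommGroup V] [Module K V] {σ : K →+* K}

/-- The map `v ↦ c (H(y, v) x - H(x, v) y)`. When `H` is hermitian, `(x, y)` is a basis and `c` is
the inverse of its Gram determinant, it is a `σ`-semilinear similitude with square `-c`; if `σ` has
order two, it generates a quaternion algebra together with the scalars. -/
def quaternionicMap (H : V →ₗ[K] V →ₛₗ[σ] K) (c : K) (x y : V) : V →ₛₗ[σ] V :=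
  c • ((LinearMap.toSpanSingleton K V x).comp (H y) -
    (LinearMap.toSpanSingleton K V y).comp (H x))

theorem quaternionicMap_apply (H : V →ₗ[K] V →ₛₗ[σ] K) (c : K) (x y v : V) :
    quaternionicMap H c x y v = c • (H y v • x - H x v • y) := rfl

variable {H : V →ₗ[K] V →ₛₗ[σ] K} {c : K} {x y : V}

theorem map_eq_of_mul_gram_eq_one (hH : ∀ u v, σ (H u v) = H v u)
    (hc : c * (H x x * H y y - H x y * H y x) = 1) : σ c = c := by
  have hσc : σ c * (H x x * H y y - H x y * H y x) = 1 := by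
    have := congrArg σ hc
    simp only [map_mul, map_sub, hH, map_one] at this
    linear_combination this
  linear_combination c * hσc - σ c * hc

theorem apply_quaternionicMap (hH : ∀ u v, σ (H u v) = H v u) (hc : σ c = c) (w v : V) :
    H w (quaternionicMap H c x y v) = c * (H v y * H w x - H v x * H w y) := by
  simp only [quaternionicMap_apply, map_smulₛₗ, map_sub, hH, smul_eq_mul, hc]

theorem apply_left_quaternionicMap (hH : ∀ u v, σ (H u v) = H v u)
    (hc : c * (H x x * H y y - H x y * H y x) = 1) (s t : K) :
    H x (quaternionicMap H c x y (s • x + t • y)) = t := by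
  rw [apply_quaternionicMap hH (map_eq_of_mul_gram_eq_one hH hc)]
  simp only [map_add, map_smul, LinearMap.add_apply, LinearMap.smul_apply, smul_eq_mul]
  linear_combination t * hc

theorem apply_right_quaternionicMap (hH : ∀ u v, σ (H u v) = H v u)
    (hc : c * (H x x * H y y - H x y * H y x) = 1) (s t : K) :
    H y (quaternionicMap H c x y (s • x + t • y)) = -s := by
  rw [apply_quaternionicMap hH (map_eq_of_mul_gram_eq_one hH hc)]
  simp only [map_add, map_smul, LinearMap.add_apply, LinearMap.smul_apply, smul_eq_mul]
  linear_combination -s * hc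

theorem quaternionicMap_quaternionicMap (hH : ∀ u v, σ (H u v) = H v u)
    (hspan : Submodule.span K {x, y} = ⊤) (hc : c * (H x x * H y y - H x y * H y x) = 1)
    (v : V) : quaternionicMap H c x y (quaternionicMap H c x y v) = -(c • v) := by
  obtain ⟨s, t, rfl⟩ := Submodule.mem_span_pair.mp (hspan ▸ Submodule.mem_top (x := v))
  rw [quaternionicMap_apply, apply_left_quaternionicMap hH hc,
    apply_right_quaternionicMap hH hc]
  module

theorem apply_quaternionicMap_quaternionicMap (hH : ∀ u v, σ (H u v) = H v u)
    (hspan : Submodule.span K {x, y} = ⊤) (hc : c * (H x x * H y y - H x y * H y x) = 1)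
    (u v : V) :
    H (quaternionicMap H c x y u) (quaternionicMap H c x y v) = c * σ (H u v) := by
  obtain ⟨s, t, rfl⟩ := Submodule.mem_span_pair.mp (hspan ▸ Submodule.mem_top (x := v))
  rw [quaternionicMap_apply H c x y u, hH]
  simp only [map_smul, map_sub, LinearMap.smul_apply, LinearMap.sub_apply, smul_eq_mul,
    apply_left_quaternionicMap hH hc, apply_right_quaternionicMap hH hc]
  rw [map_add, map_smul, map_smul, LinearMap.add_apply, LinearMap.smul_apply,
    LinearMap.smul_apply, smul_eq_mul, smul_eq_mul]
  ring

theorem quaternionicMap_bijective (hH : ∀ u v, σ (H u v) = H v u)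
    (hspan : Submodule.span K {x, y} = ⊤) (hc : c * (H x x * H y y - H x y * H y x) = 1) :
    Function.Bijective (quaternionicMap H c x y) := by
  have hcunit : IsUnit c := .of_mul_eq_one _ hc
  have comp_bijective :
      Function.Bijective (quaternionicMap H c x y ∘ quaternionicMap H c x y) := by
    have : quaternionicMap H c x y ∘ quaternionicMap H c x y = Neg.neg ∘ (c • · : V → V) :=
      funext (quaternionicMap_quaternionicMap hH hspan hc)
    rw [this]
    exact neg_involutive.bijective.comp hcunit.smul_bijective
  exact ⟨comp_bijective.injective.of_comp, comp_bijective.surjective.of_comp⟩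

section Lattice

variable {R : Type*} [CommRing R] [Algebra R K] [Module R V] [IsScalarTower R K V]
  {𝔞 𝔟 : Submodule R K} {L : Submodule R V}

theorem smul_mem_smul_of_mem_mul {n : K} {v : V} (hn : n ∈ 𝔞 * 𝔟) (hv : ∀ a ∈ 𝔞, a • v ∈ L) :
    n • v ∈ 𝔟 • L := by
  induction hn using Submodule.mul_induction_on' with
  | mem_mul_mem a ha b hb =>
    rw [mul_comm, mul_smul]
    exact Submodule.smul_mem_smul hb (hv a ha)
  | add m _ n _ hm hn =>
    rw [add_smul]
    exact add_mem hm hn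

theorem exists_eq_smul_of_mem_span_singleton_smul {n : K} {v : V}
    (hv : v ∈ Submodule.span R {n} • L) : ∃ w ∈ L, v = n • w := by
  induction hv using Submodule.smul_induction_on' with
  | smul m hm w hw =>
    obtain ⟨r, rfl⟩ := Submodule.mem_span_singleton.mp hm
    exact ⟨r • w, L.smul_mem r hw, by rw [smul_assoc, smul_comm]⟩
  | add _ _ _ _ hu hv =>
    obtain ⟨u, huL, rfl⟩ := hu
    obtain ⟨v, hvL, rfl⟩ := hv
    exact ⟨u + v, add_mem huL hvL, (smul_add n u v).symm⟩

theorem quaternionicMap_mem_smul (hc : c ∈ 𝔞 * 𝔟) (hx : x ∈ L) (hy : ∀ a ∈ 𝔞, a • y ∈ L)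
    (hint : ∀ u ∈ L, ∀ v ∈ L, H u v ∈ (1 : Submodule R K)) {v : V} (hv : v ∈ L) :
    quaternionicMap H c x y v ∈ 𝔟 • L := by
  have x_coeff_mem : c * H y v ∈ 𝔟 := by
    rw [← mul_one 𝔟]
    exact smul_mem_smul_of_mem_mul hc fun a ha ↦ by simpa using hint _ (hy a ha) v hv
  have smul_y_mem : c • y ∈ 𝔟 • L := smul_mem_smul_of_mem_mul hc hy
  obtain ⟨r, hr⟩ := Submodule.mem_one.mp (hint x hx v hv)
  rw [quaternionicMap_apply, smul_sub, smul_smul, smul_comm, ← hr, algebraMap_smul]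
  exact sub_mem (Submodule.smul_mem_smul x_coeff_mem hx) (Submodule.smul_mem _ r smul_y_mem)

theorem quaternionicMap_mem_smul_smul (hc : c ∈ 𝔞 * 𝔟) (hσ : ∀ b ∈ 𝔟, σ b ∈ 𝔞) (hx : x ∈ L)
    (hy : ∀ a ∈ 𝔞, a • y ∈ L) (hint : ∀ u ∈ L, ∀ v ∈ L, H u v ∈ (1 : Submodule R K)) {v : V}
    (hv : v ∈ 𝔟 • L) : quaternionicMap H c x y v ∈ 𝔞 • 𝔟 • L := by
  induction hv using Submodule.smul_induction_on' with
  | smul b hb v hv =>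
    rw [map_smulₛₗ]
    exact Submodule.smul_mem_smul (hσ b hb) (quaternionicMap_mem_smul hc hx hy hint hv)
  | add u _ v _ hu hv =>
    rw [map_add]
    exact add_mem hu hv

theorem quaternionicMap_image (hH : ∀ u v, σ (H u v) = H v u)
    (hspan : Submodule.span K {x, y} = ⊤) (hc : c * (H x x * H y y - H x y * H y x) = 1)
    (h𝔞𝔟 : 𝔞 * 𝔟 = Submodule.span R {c}) (hσ : ∀ b ∈ 𝔟, σ b ∈ 𝔞) (hx : x ∈ L)
    (hy : ∀ a ∈ 𝔞, a • y ∈ L) (hint : ∀ u ∈ L, ∀ v ∈ L, H u v ∈ (1 : Submodule R K)) :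
    quaternionicMap H c x y '' L = (𝔟 • L : Submodule R V) := by
  have c_mem : c ∈ 𝔞 * 𝔟 := h𝔞𝔟 ▸ Submodule.mem_span_singleton_self c
  apply Set.Subset.antisymm
  · rintro _ ⟨v, hv, rfl⟩
    exact quaternionicMap_mem_smul c_mem hx hy hint hv
  · intro v hv
    have map_mem := quaternionicMap_mem_smul_smul c_mem hσ hx hy hint hv
    rw [← Submodule.smul_assoc, smul_eq_mul, h𝔞𝔟] at map_mem
    obtain ⟨w, hw, map_eq⟩ := exists_eq_smul_of_mem_span_singleton_smul map_mem
    refine ⟨-w, neg_mem hw, ?_⟩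
    apply (IsUnit.of_mul_eq_one _ hc).smul_left_cancel.mp
    have map_map_eq := quaternionicMap_quaternionicMap hH hspan hc v
    rw [map_eq, map_smulₛₗ, map_eq_of_mul_gram_eq_one hH hc] at map_map_eq
    rw [map_neg, smul_neg, map_map_eq, neg_neg]

end Lattice

end QuaternionicMap

section QuadraticLattice

variable {K V : Type*} [Field K] [NumberField K] [AddCommGroup V] [Module K V] [Module (𝓞 K) V]
  [IsScalarTower (𝓞 K) K V] {σ : Gal(K/ℚ)} {𝔞 : FractionalIdeal (𝓞 K)⁰ K}

theorem span_smul_eq_galConj_smul (L : Submodule (𝓞 K) V) :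
    Submodule.span (𝓞 K) {u : V | ∃ a ∈ 𝔞, ∃ v ∈ L, u = σ a • v} =
      (galConj σ 𝔞).coeToSubmodule • L := by
  apply le_antisymm
  · rw [Submodule.span_le]
    rintro _ ⟨a, ha, v, hv, rfl⟩
    exact Submodule.smul_mem_smul (mem_galConj.mpr ⟨a, ha, rfl⟩) hv
  · rw [Submodule.smul_le]
    intro z hz v hv
    obtain ⟨a, ha, rfl⟩ := mem_galConj.mp hz
    exact Submodule.subset_span ⟨a, ha, v, hv, rfl⟩

theorem quaternionicMap_image_eq_galConj_smul [Algebra.IsQuadraticExtension ℚ K] (hσ : σ ≠ 1)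
    {H : V →ₗ[K] V →ₛₗ[(σ : K →+* K)] K} (hH : ∀ u v, σ (H u v) = H v u) {x y : V}
    (hspan : Submodule.span K {x, y} = ⊤) {L : Submodule (𝓞 K) V} (hx : x ∈ L)
    (hy : ∀ a ∈ 𝔞, a • y ∈ L) (hint : ∀ u ∈ L, ∀ v ∈ L, H u v ∈ (1 : Submodule (𝓞 K) K))
    (hdet : (FractionalIdeal.absNorm 𝔞 : K) * (H x x * H y y - H x y * H y x) = 1) :
    quaternionicMap H (FractionalIdeal.absNorm 𝔞 : K) x y '' L =
      ((galConj σ 𝔞).coeToSubmodule • L : Submodule (𝓞 K) V) := by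
  have mul_eq_span : 𝔞.coeToSubmodule * (galConj σ 𝔞).coeToSubmodule =
      Submodule.span (𝓞 K) {(FractionalIdeal.absNorm 𝔞 : K)} := by
    rw [← FractionalIdeal.coe_mul, mul_galConj hσ, FractionalIdeal.coe_spanSingleton]
  have conj_mem : ∀ b ∈ galConj σ 𝔞, σ b ∈ 𝔞 := by
    intro b hb
    obtain ⟨a, ha, rfl⟩ := mem_galConj.mp hb
    rwa [gal_apply_apply]
  exact quaternionicMap_image hH hspan hdet mul_eq_span conj_mem hx hy hint

end QuadraticLattice

section CoordConj

variable {K : Type*} [Semiring K]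

/-- The coordinatewise action of `σ` on vectors, as a `σ`-semilinear map. -/
def coordConj (σ : K →+* K) (ι : Type*) : (ι → K) →ₛₗ[σ] (ι → K) where
  toFun v i := σ (v i)
  map_add' _ _ := funext fun _ ↦ map_add σ _ _
  map_smul' _ _ := funext fun _ ↦ map_mul σ _ _

variable {σ : K →+* K} {ι : Type*}

theorem coordConj_involutive (hσ : Function.Involutive σ) :
    Function.Involutive (coordConj σ ι) :=
  fun v ↦ funext fun i ↦ hσ (v i)

theorem coordConj_image_conj (hσ : Function.Involutive σ) (S : Set (ι → K)) :
    coordConj σ ι '' {v | ∃ w ∈ S, v = fun i ↦ σ (w i)} = S := by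
  have conj_eq_image : {v | ∃ w ∈ S, v = fun i ↦ σ (w i)} = coordConj σ ι '' S :=
    Set.ext fun _ ↦ exists_congr fun _ ↦ and_congr_right fun _ ↦ eq_comm
  rw [conj_eq_image, ← Set.image_comp, (coordConj_involutive hσ).comp_self, Set.image_id]

end CoordConj

theorem exists_sesquilinear_eq {K V : Type*} [CommRing K] [AddCommGroup V] [Module K V]
    {σ : K →+* K} {H : V → V → K}
    (hlin₁ : ∀ (c : K) (u u' v : V), H (c • u + u') v = c * H u v + H u' v)
    (hlin₂ : ∀ (c : K) (u v v' : V), H u (c • v + v') = σ c * H u v + H u v') :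
    ∃ B : V →ₗ[K] V →ₛₗ[σ] K, (fun u v ↦ B u v) = H := by
  have zero_left (v : V) : H 0 v = 0 := by simpa using hlin₁ 1 0 0 v
  have zero_right (u : V) : H u 0 = 0 := by simpa using hlin₂ 1 u 0 0
  exact ⟨LinearMap.mk₂'ₛₗ (RingHom.id K) σ H
    (fun u u' v ↦ by simpa using hlin₁ 1 u u' v)
    (fun c u v ↦ by simpa [zero_left] using hlin₁ c u 0 v)
    (fun u v v' ↦ by simpa using hlin₂ 1 u v v')
    (fun c u v ↦ by simpa [zero_right] using hlin₂ c u v 0), rfl⟩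

theorem stmt_15_general
    (K : Type*) [Field K] [NumberField K]
    (hdeg : Module.finrank ℚ K = 2)
    (σ : K ≃ₐ[ℚ] K) (hσ : σ ≠ AlgEquiv.refl)
    (𝔞 : FractionalIdeal (nonZeroDivisors (𝓞 K)) K)
    (N : ℚ) (hN : N = FractionalIdeal.absNorm 𝔞)
    (x y : Fin 2 → K)
    (hspan : Submodule.span K {x, y} = ⊤)
    (L : Submodule (𝓞 K) (Fin 2 → K))
    (hL : L = Submodule.span (𝓞 K) ({x} ∪ {v : Fin 2 → K | ∃ a ∈ 𝔞, v = a • y}))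
    (H : (Fin 2 → K) → (Fin 2 → K) → K)
    (hlin₁ : ∀ (c : K) (u u' v : Fin 2 → K), H (c • u + u') v = c * H u v + H u' v)
    (hlin₂ : ∀ (c : K) (u v v' : Fin 2 → K), H u (c • v + v') = σ c * H u v + H u v')
    (hherm : ∀ u v, σ (H u v) = H v u)
    (hint : ∀ u ∈ L, ∀ v ∈ L, ∃ c : 𝓞 K, H u v = algebraMap (𝓞 K) K c)
    (hdet : (N : K) * (H x x * H y y - H x y * H y x) = 1) :
    ∃ φ : (Fin 2 → K) ≃ₗ[K] (Fin 2 → K),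
      (⇑φ '' {v : Fin 2 → K | ∃ w ∈ L, v = fun i => σ (w i)} =
        (Submodule.span (𝓞 K) {u : Fin 2 → K | ∃ a ∈ 𝔞, ∃ v ∈ L, u = σ a • v} :
          Set (Fin 2 → K))) ∧
      ∀ u v : Fin 2 → K,
        (N : K)⁻¹ * H (φ u) (φ v) = σ (H (fun i => σ (u i)) (fun i => σ (v i))) := by
  have : Algebra.IsQuadraticExtension ℚ K := { finrank_eq_two' := hdeg }
  have hinv : Function.Involutive (σ : K →+* K) := gal_apply_apply σ
  have : RingHomInvPair (σ : K →+* K) (σ : K →+* K) := ⟨RingHom.ext hinv, RingHom.ext hinv⟩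
  obtain ⟨H, rfl⟩ := exists_sesquilinear_eq (σ := (σ : K →+* K)) hlin₁ hlin₂
  subst hN
  let γ := LinearEquiv.ofInvolutive (coordConj (σ : K →+* K) (Fin 2)) (coordConj_involutive hinv)
  let ψ := LinearEquiv.ofBijective (quaternionicMap H (FractionalIdeal.absNorm 𝔞 : K) x y)
    (quaternionicMap_bijective hherm hspan hdet)
  refine ⟨γ.trans ψ, ?_, fun u v ↦ ?_⟩
  · have x_mem : x ∈ L := hL ▸ Submodule.subset_span (.inl rfl)
    have smul_y_mem : ∀ a ∈ 𝔞, a • y ∈ L := fun a ha ↦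
      hL ▸ Submodule.subset_span (.inr ⟨a, ha, rfl⟩)
    have integral : ∀ u ∈ L, ∀ v ∈ L, H u v ∈ (1 : Submodule (𝓞 K) K) := fun u hu v hv ↦
      Submodule.mem_one.mpr ((hint u hu v hv).imp fun _ ↦ Eq.symm)
    calc (γ.trans ψ) '' {v | ∃ w ∈ L, v = fun i ↦ σ (w i)}
      _ = ψ '' (γ '' {v | ∃ w ∈ L, v = fun i ↦ σ (w i)}) := Set.image_comp ψ γ _
      _ = ψ '' L := congrArg (ψ '' ·) (coordConj_image_conj hinv (L : Set (Fin 2 → K)))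
      _ = _ := quaternionicMap_image_eq_galConj_smul hσ hherm hspan x_mem smul_y_mem integral hdet
      _ = _ := by rw [span_smul_eq_galConj_smul]
  · rw [inv_mul_eq_iff_eq_mul₀ (left_ne_zero_of_mul_eq_one hdet)]
    exact apply_quaternionicMap_quaternionicMap hherm hspan hdet (γ u) (γ v)

/-- Let `K` be an imaginary quadratic field, `σ` the nontrivial automorphism
of `K/ℚ`, `𝔞` a nonzero fractional ideal of norm `N`, `(x, y)` a `K`-basis of `K²`, and
`L = 𝓞_K·x + 𝔞·y`.  If `H` is a `σ`-hermitian form on `K²` that is integral on `L` and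
satisfies `N·det(Gram(x,y)) = 1`, then the conjugate hermitian lattice `(σ(L), H̄)` is
isometric to `(σ(𝔞)·L, N⁻¹·H)`. -/
theorem stmt_15
    (K : Type*) [Field K] [NumberField K]
    (hdeg : Module.finrank ℚ K = 2)
    (hcplx : IsEmpty (K →+* ℝ))
    (σ : K ≃ₐ[ℚ] K) (hσ : σ ≠ AlgEquiv.refl)
    (𝔞 : FractionalIdeal (nonZeroDivisors (𝓞 K)) K) (h𝔞 : 𝔞 ≠ 0)
    (N : ℚ) (hN : N = FractionalIdeal.absNorm 𝔞)
    (x y : Fin 2 → K)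
    (hbasis : LinearIndependent K ![x, y])
    (hspan : Submodule.span K {x, y} = ⊤)
    (L : Submodule (𝓞 K) (Fin 2 → K))
    (hL : L = Submodule.span (𝓞 K) ({x} ∪ {v : Fin 2 → K | ∃ a ∈ 𝔞, v = a • y}))
    (H : (Fin 2 → K) → (Fin 2 → K) → K)
    (hlin₁ : ∀ (c : K) (u u' v : Fin 2 → K), H (c • u + u') v = c * H u v + H u' v)
    (hlin₂ : ∀ (c : K) (u v v' : Fin 2 → K), H u (c • v + v') = σ c * H u v + H u v')
    (hherm : ∀ u v, σ (H u v) = H v u)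
    (hint : ∀ u ∈ L, ∀ v ∈ L, ∃ c : 𝓞 K, H u v = algebraMap (𝓞 K) K c)
    (hdet : (N : K) * (H x x * H y y - H x y * H y x) = 1) :
    ∃ φ : (Fin 2 → K) ≃ₗ[K] (Fin 2 → K),
      (⇑φ '' {v : Fin 2 → K | ∃ w ∈ L, v = fun i => σ (w i)} =
        (Submodule.span (𝓞 K) {u : Fin 2 → K | ∃ a ∈ 𝔞, ∃ v ∈ L, u = σ a • v} :
          Set (Fin 2 → K))) ∧
      ∀ u v : Fin 2 → K,
        (N : K)⁻¹ * H (φ u) (φ v) = σ (H (fun i => σ (u i)) (fun i => σ (v i))) :=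
  stmt_15_general K hdeg σ hσ 𝔞 N hN x y hspan L hL H hlin₁ hlin₂ hherm hint hdet
end

section
/- Let σ be the nontrivial automorphism of K over ℚ, restricting to a ring automorphism of 𝓞_K, and let τ : K →+* ℂ be an embedding. Let M be a g×g matrix with entries in 𝓞_K which is σ-hermitian (the σ-entrywise image of M transposed equals M) and positive definite (its entrywise image in M_g(ℂ) under τ is a positive definite hermitian matrix). Then there exists a g×g matrix P with entries in 𝓞_K with det(P) ≠ 0 and positive integers d₁, …, d_g such that σ(P)ᵀ·M·P is the diagonal matrix with diagonal entries d₁, …, d_g (viewed in 𝓞_K). -/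
open NumberField
open scoped ComplexOrder

/-!
Write the `σ`-hermitian matrix in blocks with a `1 × 1` lower right corner. Block elimination
replaces that corner by its Schur complement, which is a quotient of two principal minors; by
induction, the matrix is congruent over `K` to a diagonal matrix whose entries are fixed by `σ` and
have positive image under `τ`. Positivity is read off from principal minors, so `σ` and complex
conjugation never have to be compared. Elements fixed by `σ` are rational, and rescaling the change
of basis by a nonzero integer `b` multiplies the diagonal by `b²`, which clears all denominators
and keeps the diagonal positive.
-/

section StarCongruence

open Matrix

/-- Congruence of sesquilinear forms: `M` and `N` are Gram matrices of the same form in two bases,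
where the involution of the form is the `star` of the coefficient ring. -/
def StarCongruent {n R : Type*} [Fintype n] [DecidableEq n] [CommRing R] [StarRing R]
    (M N : Matrix n n R) : Prop :=
  ∃ Q : Matrix n n R, IsUnit Q ∧ Qᴴ * M * Q = N

namespace StarCongruent

variable {m n R : Type*} [Fintype m] [DecidableEq m] [Fintype n] [DecidableEq n]
  [CommRing R] [StarRing R]

theorem refl (M : Matrix n n R) : StarCongruent M M :=
  ⟨1, isUnit_one, by simp⟩

theorem trans {M N L : Matrix n n R} (hMN : StarCongruent M N) (hNL : StarCongruent N L) :
    StarCongruent M L := by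
  obtain ⟨P, hP, rfl⟩ := hMN
  obtain ⟨Q, hQ, rfl⟩ := hNL
  exact ⟨P * Q, hP.mul hQ, by simp only [conjTranspose_mul, Matrix.mul_assoc]⟩

theorem isHermitian {M N : Matrix n n R} (h : StarCongruent M N) (hM : M.IsHermitian) :
    N.IsHermitian := by
  obtain ⟨Q, -, rfl⟩ := h
  exact isHermitian_conjTranspose_mul_mul Q hM

theorem submatrix {M N : Matrix n n R} (h : StarCongruent M N) (f : m ≃ n) :
    StarCongruent (M.submatrix f f) (N.submatrix f f) := by
  obtain ⟨Q, hQ, rfl⟩ := h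
  refine ⟨Q.submatrix f f, (isUnit_submatrix_equiv f f).mpr hQ, ?_⟩
  rw [conjTranspose_submatrix, submatrix_mul_equiv, submatrix_mul_equiv]

theorem fromBlocks {A A' : Matrix m m R} {D D' : Matrix n n R} (hA : StarCongruent A A')
    (hD : StarCongruent D D') :
    StarCongruent (Matrix.fromBlocks A 0 0 D) (Matrix.fromBlocks A' 0 0 D') := by
  obtain ⟨P, hP, rfl⟩ := hA
  obtain ⟨Q, hQ, rfl⟩ := hD
  refine ⟨Matrix.fromBlocks P 0 0 Q, isUnit_fromBlocks_zero₂₁.mpr ⟨hP, hQ⟩, ?_⟩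
  simp [fromBlocks_conjTranspose, fromBlocks_multiply]

theorem schurComplement {A : Matrix m m R} (hA : A.IsHermitian) (hdet : IsUnit A.det)
    (B : Matrix m n R) (D : Matrix n n R) :
    StarCongruent (Matrix.fromBlocks A B Bᴴ D)
      (Matrix.fromBlocks A 0 0 (D - Bᴴ * A⁻¹ * B)) := by
  refine ⟨Matrix.fromBlocks 1 (-(A⁻¹ * B)) 0 1,
    isUnit_fromBlocks_zero₂₁.mpr ⟨isUnit_one, isUnit_one⟩, ?_⟩
  simp [fromBlocks_conjTranspose, fromBlocks_multiply, conjTranspose_nonsing_inv, hA.eq,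
    Matrix.mul_assoc, nonsing_inv_mul _ hdet, mul_nonsing_inv_cancel_left _ _ hdet, neg_add_eq_sub]

end StarCongruent

end StarCongruence

section PositiveMinors

open Matrix

variable {m n K 𝕜 : Type*} [Fintype m] [DecidableEq m] [Fintype n] [DecidableEq n]
  [Field K] [RCLike 𝕜] {τ : K →+* 𝕜}

theorem map_det_pos_of_posDef_map {M : Matrix n n K} (hM : (M.map τ).PosDef) : 0 < τ M.det := by
  rw [RingHom.map_det]
  exact hM.det_pos

theorem isUnit_det_of_posDef_map {M : Matrix n n K} (hM : (M.map τ).PosDef) : IsUnit M.det :=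
  isUnit_iff_ne_zero.mpr fun h => (map_det_pos_of_posDef_map hM).ne' (by rw [h, map_zero])

theorem map_det_schurComplement_pos {A : Matrix m m K} {B : Matrix m n K} {C : Matrix n m K}
    {D : Matrix n n K} (h : ((fromBlocks A B C D).map τ).PosDef) :
    0 < τ (D - C * A⁻¹ * B).det := by
  have hA : (A.map τ).PosDef := h.submatrix Sum.inl_injective
  let _ := invertibleOfIsUnitDet A (isUnit_det_of_posDef_map hA)
  have hdet := map_det_pos_of_posDef_map h
  rw [det_fromBlocks₁₁, invOf_eq_nonsing_inv, map_mul] at hdet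
  exact pos_of_mul_pos_right hdet (map_det_pos_of_posDef_map hA).le

variable [StarRing K]

theorem exists_starCongruent_diagonal_sum_unique [Unique n] {A : Matrix m m K} {B : Matrix m n K}
    {C : Matrix n m K} {D : Matrix n n K} (hM : (fromBlocks A B C D).IsHermitian)
    (hpos : ((fromBlocks A B C D).map τ).PosDef) {e : m → K} (he : ∀ i, 0 < τ (e i))
    (hAe : StarCongruent A (diagonal e)) :
    ∃ e' : m ⊕ n → K, (∀ i, 0 < τ (e' i)) ∧
      StarCongruent (fromBlocks A B C D) (diagonal e') := by
  obtain ⟨hA, rfl, -, -⟩ := isHermitian_fromBlocks_iff.mp hM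
  have hdet : IsUnit A.det := isUnit_det_of_posDef_map (hpos.submatrix Sum.inl_injective)
  set S : Matrix n n K := D - Bᴴ * A⁻¹ * B
  have hSpos : 0 < τ S.det := map_det_schurComplement_pos hpos
  have hSdiag : S = diagonal fun _ => S.det := by
    ext i j
    obtain rfl := Unique.eq_default i
    obtain rfl := Unique.eq_default j
    simp
  refine ⟨Sum.elim e fun _ => S.det, Sum.rec he fun _ => hSpos, ?_⟩
  rw [← fromBlocks_diagonal, ← hSdiag]
  exact (StarCongruent.schurComplement hA hdet B D).trans (hAe.fromBlocks (.refl S))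

theorem exists_starCongruent_diagonal_of_submatrix (f : m ≃ n) {M : Matrix n n K}
    (h : ∃ e : m → K, (∀ i, 0 < τ (e i)) ∧ StarCongruent (M.submatrix f f) (diagonal e)) :
    ∃ e : n → K, (∀ i, 0 < τ (e i)) ∧ StarCongruent M (diagonal e) := by
  obtain ⟨e, he, hMe⟩ := h
  exact ⟨e ∘ f.symm, fun i => he _, by simpa using hMe.submatrix f.symm⟩

theorem exists_starCongruent_diagonal_fin {k : ℕ} {M : Matrix (Fin k) (Fin k) K}
    (hM : M.IsHermitian) (hpos : (M.map τ).PosDef) :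
    ∃ e : Fin k → K, (∀ i, 0 < τ (e i)) ∧ StarCongruent M (diagonal e) := by
  induction k with
  | zero => exact ⟨0, isEmptyElim, Subsingleton.elim M (diagonal 0) ▸ .refl M⟩
  | succ k ih =>
    let f : Fin k ⊕ Fin 1 ≃ Fin (k + 1) := finSumFinEquiv
    have hN : (M.submatrix f f).IsHermitian := hM.submatrix f
    have hNpos : ((M.submatrix f f).map τ).PosDef := hpos.submatrix f.injective
    obtain ⟨e, he, hAe⟩ := ih (hN.submatrix Sum.inl) (hNpos.submatrix Sum.inl_injective)
    refine exists_starCongruent_diagonal_of_submatrix f ?_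
    rw [← fromBlocks_toBlocks (M.submatrix f f)] at hN hNpos ⊢
    exact exists_starCongruent_diagonal_sum_unique hN hNpos he hAe

theorem exists_starCongruent_diagonal_of_posDef_map {M : Matrix n n K} (hM : M.IsHermitian)
    (hpos : (M.map τ).PosDef) :
    ∃ e : n → K, (∀ i, 0 < τ (e i)) ∧ StarCongruent M (diagonal e) :=
  let f := (Fintype.equivFin n).symm
  exists_starCongruent_diagonal_of_submatrix f
    (exists_starCongruent_diagonal_fin (hM.submatrix f) (hpos.submatrix f.injective))

end PositiveMinors

section Quadratic

variable {F K : Type*} [Field F] [Field K] [Algebra F K]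

theorem mem_range_algebraMap_of_apply_eq_self (hp : (Module.finrank F K).Prime)
    {σ : K ≃ₐ[F] K} (hσ : σ ≠ 1) {x : K} (hx : σ x = x) : x ∈ Set.range (algebraMap F K) := by
  have := IntermediateField.isSimpleOrder_of_finrank_prime F K hp
  let E := FixedBy.intermediateField F K σ
  have hE : E ≠ ⊤ := fun h =>
    hσ <| AlgEquiv.ext fun y => (h ▸ IntermediateField.mem_top : y ∈ E)
  have hxE : x ∈ E := hx
  rwa [(eq_bot_or_eq_top E).resolve_right hE, IntermediateField.mem_bot] at hxE

theorem involutive_of_isQuadraticExtension [Algebra.IsQuadraticExtension F K] [IsGalois F K]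
    (σ : K ≃ₐ[F] K) : Function.Involutive σ := by
  have hcard : Nat.card (K ≃ₐ[F] K) = 2 := by
    rw [IsGalois.card_aut_eq_finrank, Algebra.IsQuadraticExtension.finrank_eq_two]
  have hsq : σ ^ 2 = 1 := by rw [← hcard, pow_card_eq_one']
  exact DFunLike.congr_fun hsq

end Quadratic

section Integrality

theorem exists_ne_zero_forall_isIntegral_smul {ι R S : Type*} [Finite ι] [CommRing R]
    [NoZeroDivisors R] [CommRing S] [Algebra R S] [Algebra.IsAlgebraic R S] (x : ι → S) :
    ∃ b : R, b ≠ 0 ∧ ∀ i, IsIntegral R (b • x i) := by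
  classical
  cases nonempty_fintype ι
  obtain ⟨b, hb, hx_int⟩ := Algebra.IsAlgebraic.exists_integral_multiples R (Finset.univ.image x)
  exact ⟨b, hb, fun i => hx_int _ (Finset.mem_image_of_mem x (Finset.mem_univ i))⟩

theorem exists_pos_natCast_eq_of_isIntegral {K 𝕜 : Type*} [Field K] [CharZero K] [RCLike 𝕜]
    (τ : K →+* 𝕜) {x : K} (hx_int : IsIntegral ℤ x) (hrat : x ∈ Set.range (algebraMap ℚ K))
    (hpos : 0 < τ x) : ∃ d : ℕ, 0 < d ∧ x = d := by
  obtain ⟨q, rfl⟩ := hrat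
  obtain ⟨z, rfl⟩ := IsIntegrallyClosed.isIntegral_iff.mp <|
    (isIntegral_algebraMap_iff (algebraMap ℚ K).injective).mp hx_int
  simp only [algebraMap_int_eq, eq_intCast, map_intCast, Int.cast_pos] at hpos ⊢
  lift z to ℕ using hpos.le
  exact ⟨z, by simpa using hpos, by simp⟩

open Matrix

theorem det_ne_zero_of_map_eq_smul {n R K : Type*} [Fintype n] [DecidableEq n] [CommRing R]
    [Field K] {f : R →+* K} {P : Matrix n n R} {Q : Matrix n n K} {c : K} (hP : P.map f = c • Q)
    (hc : c ≠ 0) (hQ : IsUnit Q) : P.det ≠ 0 := by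
  have hQdet : Q.det ≠ 0 := ((isUnit_iff_isUnit_det Q).mp hQ).ne_zero
  have hfdet : f P.det = c ^ Fintype.card n * Q.det := by
    rw [RingHom.map_det, RingHom.mapMatrix_apply, hP, det_smul]
  intro h
  rw [h, map_zero] at hfdet
  exact mul_ne_zero (pow_ne_zero _ hc) hQdet hfdet.symm

theorem exists_integral_conjTranspose_mul_mul_eq_diagonal {n K 𝕜 : Type*} [Fintype n]
    [DecidableEq n] [Field K] [NumberField K] [StarRing K] [RCLike 𝕜]
    (hfix : ∀ x : K, IsSelfAdjoint x → x ∈ Set.range (algebraMap ℚ K)) {τ : K →+* 𝕜}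
    {M : Matrix n n K} (hM : M.IsHermitian) (hpos : (M.map τ).PosDef) :
    ∃ P : Matrix n n (𝓞 K), P.det ≠ 0 ∧ ∃ d : n → ℕ, (∀ i, 0 < d i) ∧
      (P.map (algebraMap (𝓞 K) K))ᴴ * M * P.map (algebraMap (𝓞 K) K) =
        diagonal fun i => (d i : K) := by
  obtain ⟨e, he, hMe⟩ := exists_starCongruent_diagonal_of_posDef_map hM hpos
  have hself : ∀ i, IsSelfAdjoint (e i) := isHermitian_diagonal_iff.mp (hMe.isHermitian hM)
  obtain ⟨Q, hQ, hQe⟩ := hMe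
  have : Algebra.IsAlgebraic ℤ K :=
    (IsFractionRing.comap_isAlgebraic_iff (K := ℚ)).mpr inferInstance
  obtain ⟨b, hb, hb_int⟩ := exists_ne_zero_forall_isIntegral_smul (R := ℤ)
    (Sum.elim (fun p : n × n => Q p.1 p.2) e)
  let P : Matrix n n (𝓞 K) := .of fun i j => ⟨b • Q i j, hb_int (.inl (i, j))⟩
  have hP : P.map (algebraMap (𝓞 K) K) = (b : K) • Q := by
    ext i j
    exact zsmul_eq_mul (Q i j) b
  have hd : ∀ i, ∃ d : ℕ, 0 < d ∧ b • b • e i = d := fun i => by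
    refine exists_pos_natCast_eq_of_isIntegral τ ((hb_int (.inr i)).smul b) (hfix _ ?_) ?_
    · exact .smul (.all b) (.smul (.all b) (hself i))
    · rw [smul_smul, map_zsmul]
      exact zsmul_pos (he i) (mul_self_pos.mpr hb)
  choose d hd_pos hd_eq using hd
  refine ⟨P, det_ne_zero_of_map_eq_smul hP (Int.cast_ne_zero.mpr hb) hQ, d, hd_pos, ?_⟩
  calc (P.map (algebraMap (𝓞 K) K))ᴴ * M * P.map (algebraMap (𝓞 K) K)
      = b • b • (Qᴴ * M * Q) := by
        simp only [hP, Int.cast_smul_eq_zsmul, conjTranspose_zsmul, Matrix.smul_mul,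
          Matrix.mul_smul]
    _ = diagonal fun i => b • b • e i := by simp only [hQe, ← diagonal_smul, Pi.smul_def]
    _ = diagonal fun i => (d i : K) := by simp only [hd_eq]

end Integrality

/-- The `*`-ring structure of a commutative ring whose `star` is the given involution. -/
abbrev starRingOfInvolutive {R : Type*} [CommSemiring R] (σ : R →+* R)
    (hσ : Function.Involutive σ) : StarRing R where
  star := σ
  star_involutive := hσ
  star_mul a b := by rw [map_mul, mul_comm]
  star_add := map_add σ

theorem stmt_16_general {K 𝕜 n : Type*} [Field K] [NumberField K] [RCLike 𝕜] [Fintype n]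
    [DecidableEq n] (hdeg : Module.finrank ℚ K = 2) (σ : K ≃ₐ[ℚ] K) (hσ : σ ≠ AlgEquiv.refl)
    (τ : K →+* 𝕜) (M : Matrix n n K) (hherm : ∀ i j, σ (M i j) = M j i)
    (hpos : (M.map τ).PosDef) :
    ∃ P : Matrix n n (𝓞 K), P.det ≠ 0 ∧
      ∃ d : n → ℕ, (∀ i, 0 < d i) ∧
        (P.map fun a => σ (algebraMap (𝓞 K) K a)).transpose * M *
            P.map (algebraMap (𝓞 K) K) =
          Matrix.diagonal fun i => (d i : K) := by
  have : Algebra.IsQuadraticExtension ℚ K := ⟨hdeg⟩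
  have : IsGalois ℚ K := {}
  let _ : StarRing K := starRingOfInvolutive (σ : K →+* K) (involutive_of_isQuadraticExtension σ)
  have hfix : ∀ x : K, IsSelfAdjoint x → x ∈ Set.range (algebraMap ℚ K) := fun _ hx =>
    mem_range_algebraMap_of_apply_eq_self (hdeg ▸ Nat.prime_two) hσ hx
  exact exists_integral_conjTranspose_mul_mul_eq_diagonal hfix
    (Matrix.IsHermitian.ext fun i j => hherm j i) hpos

/-- Let `K` be an imaginary quadratic field with nontrivial automorphism
`σ` and embedding `τ : K →+* ℂ`.  Every `σ`-hermitian positive definite matrix `M` over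
`𝓞 K` can be diagonalized: there are `P` over `𝓞 K` with `det P ≠ 0` and positive integers
`d₁, …, d_g` with `σ(P)ᵀ · M · P = diagonal (d₁, …, d_g)`. -/
theorem stmt_16
    (K : Type*) [Field K] [NumberField K]
    (hdeg : Module.finrank ℚ K = 2)
    (hcplx : IsEmpty (K →+* ℝ))
    (σ : K ≃ₐ[ℚ] K) (hσ : σ ≠ AlgEquiv.refl)
    (τ : K →+* ℂ)
    (g : ℕ)
    (M : Matrix (Fin g) (Fin g) (𝓞 K))
    (hherm : ∀ i j, σ (algebraMap (𝓞 K) K (M i j)) = algebraMap (𝓞 K) K (M j i))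
    (hpos : Matrix.PosDef (M.map fun a => τ (algebraMap (𝓞 K) K a))) :
    ∃ P : Matrix (Fin g) (Fin g) (𝓞 K), P.det ≠ 0 ∧
      ∃ d : Fin g → ℕ, (∀ i, 0 < d i) ∧
        (Matrix.transpose (P.map fun a => σ (algebraMap (𝓞 K) K a))) *
            (M.map fun a => algebraMap (𝓞 K) K a) *
            (P.map fun a => algebraMap (𝓞 K) K a) =
          Matrix.diagonal fun i => ((d i : ℕ) : K) := by
  exact stmt_16_general hdeg σ hσ τ (M.map fun a => algebraMap (𝓞 K) K a) hherm hpos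
end
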